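/- Let r ≥ 2 be an integer and let F ∈ ℂ[X,Y] be an irreducible polynomial. Let f : ℂ² → ℂ² be either f(x,y) = (x^r, y^r) or f(x,y) = (−x^r, −y^r), and suppose that for every (x,y) ∈ (ℂ∖{0})² with F(x,y) = 0 one has F(f(x,y)) = 0. Then either F is a scalar multiple of X or of Y (equivalently, the zero set of F does not meet (ℂ∖{0})²), or there exist coprime integers m, n (not both zero) and a root of unity ν such that {(x,y) ∈ (ℂ∖{0})² : F(x,y) = 0} = {(x,y) ∈ (ℂ∖{0})² : x^m y^n = ν}. -/

import Mathlib

open MvPolynomial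

/-- Translation of a polynomial by a torus element. -/
noncomputable def tr (z w : ℂ) : MvPolynomial (Fin 2) ℂ →ₐ[ℂ] MvPolynomial (Fin 2) ℂ :=
  aeval ![C z * X 0, C w * X 1]

lemma tr_monomial (z w : ℂ) (s : Fin 2 →₀ ℕ) (c : ℂ) :
    tr z w (monomial s c) = monomial s (z ^ (s 0) * w ^ (s 1) * c) := by
  unfold tr
  rw [aeval_monomial, monomial_eq, Finsupp.prod_fintype _ _ (by simp),
    Finsupp.prod_fintype _ _ (by simp)]
  simp [Fin.prod_univ_two, mul_pow, algebraMap_eq]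
  ring

lemma coeff_tr (z w : ℂ) (F : MvPolynomial (Fin 2) ℂ) (s : Fin 2 →₀ ℕ) :
    coeff s (tr z w F) = z ^ (s 0) * w ^ (s 1) * coeff s F := by
  classical
  induction F using MvPolynomial.induction_on' with
  | monomial t c =>
    rw [tr_monomial, coeff_monomial, coeff_monomial]
    split_ifs with h
    · rw [h]
    · simp
  | add p q hp hq => rw [map_add, coeff_add, coeff_add, hp, hq]; ring

lemma tr_tr (z w z' w' : ℂ) (F : MvPolynomial (Fin 2) ℂ) :
    tr z w (tr z' w' F) = tr (z * z') (w * w') F := by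
  ext s
  simp only [coeff_tr]
  ring

lemma tr_one (F : MvPolynomial (Fin 2) ℂ) : tr 1 1 F = F := by
  ext s
  simp [coeff_tr]

/-- Translation as an equivalence. -/
noncomputable def trE (z w : ℂ) (hz : z ≠ 0) (hw : w ≠ 0) :
    MvPolynomial (Fin 2) ℂ ≃ₐ[ℂ] MvPolynomial (Fin 2) ℂ :=
  AlgEquiv.ofAlgHom (tr z w) (tr z⁻¹ w⁻¹)
    (by apply AlgHom.ext; intro F; simp [tr_tr, hz, hw, tr_one])
    (by apply AlgHom.ext; intro F; simp [tr_tr, hz, hw, tr_one])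

lemma tr_irreducible (z w : ℂ) (hz : z ≠ 0) (hw : w ≠ 0) {F : MvPolynomial (Fin 2) ℂ}
    (hF : Irreducible F) : Irreducible (tr z w F) :=
  (MulEquiv.irreducible_iff (trE z w hz hw)).2 hF

lemma support_tr (z w : ℂ) (hz : z ≠ 0) (hw : w ≠ 0) (F : MvPolynomial (Fin 2) ℂ) :
    (tr z w F).support = F.support := by
  ext s
  simp [mem_support_iff, coeff_tr, hz, hw]

lemma totalDegree_tr (z w : ℂ) (hz : z ≠ 0) (hw : w ≠ 0) (F : MvPolynomial (Fin 2) ℂ) :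
    (tr z w F).totalDegree = F.totalDegree := by
  simp [totalDegree, support_tr z w hz hw F]

lemma eval_tr (z w x y : ℂ) (F : MvPolynomial (Fin 2) ℂ) :
    eval ![x, y] (tr z w F) = eval ![z * x, w * y] F := by
  induction F using MvPolynomial.induction_on' with
  | monomial t c =>
    rw [tr_monomial, eval_monomial, eval_monomial, Finsupp.prod_fintype _ _ (by simp),
      Finsupp.prod_fintype _ _ (by simp)]
    simp [Fin.prod_univ_two, mul_pow]
    ring
  | add p q hp hq => simp only [map_add, hp, hq]

lemma tr_expand (z w : ℂ) (N : ℕ) (hz : z ^ N = 1) (hw : w ^ N = 1)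
    (F : MvPolynomial (Fin 2) ℂ) : tr z w (expand N F) = expand N F := by
  induction F using MvPolynomial.induction_on' with
  | monomial t c =>
    rw [expand_monomial, tr_monomial]
    simp [pow_mul, hz, hw]
  | add p q hp hq => simp only [map_add, hp, hq]

/-- Nullstellensatz on the torus. -/
lemma nss (G H : MvPolynomial (Fin 2) ℂ)
    (h : ∀ x y : ℂ, x ≠ 0 → y ≠ 0 → eval ![x, y] G = 0 → eval ![x, y] H = 0) :
    ∃ k : ℕ, G ∣ (X 0 * X 1 * H) ^ k := by
  have h1 : X 0 * X 1 * H ∈ vanishingIdeal ℂ (zeroLocus ℂ (Ideal.span {G})) := by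
    intro v hv
    have hv' : aeval v G = 0 := hv G (Ideal.mem_span_singleton_self G)
    have e : v = ![v 0, v 1] := by ext i; fin_cases i <;> rfl
    rw [aeval_eq_eval] at hv' ⊢
    simp only [map_mul, eval_X, coe_aeval_eq_eval] at hv' ⊢
    by_cases h0 : v 0 = 0
    · simp [h0]
    by_cases h1 : v 1 = 0
    · simp [h1]
    rw [e] at hv'
    have := h _ _ h0 h1 hv'
    rw [← e] at this
    rw [this, mul_zero]
  rw [vanishingIdeal_zeroLocus_eq_radical] at h1
  obtain ⟨k, hk⟩ := h1
  exact ⟨k, Ideal.mem_span_singleton.1 hk⟩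

lemma nss_prime (F H : MvPolynomial (Fin 2) ℂ) (hF : Irreducible F)
    (h0 : ¬ F ∣ X 0) (h1 : ¬ F ∣ X 1)
    (h : ∀ x y : ℂ, x ≠ 0 → y ≠ 0 → eval ![x, y] F = 0 → eval ![x, y] H = 0) : F ∣ H := by
  obtain ⟨k, hk⟩ := nss F H h
  have hp := hF.prime
  rcases hp.dvd_or_dvd (hp.dvd_of_dvd_pow hk) with h' | h'
  · rcases hp.dvd_or_dvd h' with h' | h'
    · exact absurd h' h0
    · exact absurd h' h1
  · exact h'

lemma dvd_X_case (F : MvPolynomial (Fin 2) ℂ) (hF : Irreducible F) (i : Fin 2) (h : F ∣ X i) :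
    ∃ c : ℂ, F = C c * X i := by
  have hX : Irreducible (X i : MvPolynomial (Fin 2) ℂ) := X_prime.irreducible
  obtain ⟨u, hu⟩ := (hF.associated_of_dvd hX h).symm
  obtain ⟨c, hc, hc'⟩ := (MvPolynomial.isUnit_iff_eq_C_of_isReduced).1 u.isUnit
  exact ⟨c, by rw [← hu, hc', mul_comm]⟩

lemma exists_two (F : MvPolynomial (Fin 2) ℂ) (hF : Irreducible F)
    (h0 : ¬ F ∣ X 0) (h1 : ¬ F ∣ X 1) : ∃ s ∈ F.support, ∃ t ∈ F.support, s ≠ t := by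
  by_contra! hcon
  have hne : F.support.Nonempty := by
    rw [Finset.nonempty_iff_ne_empty, Ne, support_eq_empty]; exact hF.ne_zero
  obtain ⟨s, hs⟩ := hne
  have hsup : F.support = {s} := by
    ext t
    rw [Finset.mem_singleton]
    exact ⟨fun ht => hcon t ht s hs, fun h => h ▸ hs⟩
  have hm : F = C (coeff s F) * (X 0 ^ (s 0) * X 1 ^ (s 1)) := by
    conv_lhs => rw [F.as_sum, hsup, Finset.sum_singleton, monomial_eq,
      Finsupp.prod_fintype _ _ (by simp), Fin.prod_univ_two]
  have hd : F ∣ X 0 ^ (s 0) * X 1 ^ (s 1) := by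
    refine ⟨C (coeff s F)⁻¹, ?_⟩
    have hc : C (coeff s F)⁻¹ * C (coeff s F) = (1 : MvPolynomial (Fin 2) ℂ) := by
      rw [← C_mul, inv_mul_cancel₀ (mem_support_iff.1 hs), C_1]
    calc (X 0 ^ (s 0) * X 1 ^ (s 1) : MvPolynomial (Fin 2) ℂ)
        = C (coeff s F)⁻¹ * C (coeff s F) * (X 0 ^ (s 0) * X 1 ^ (s 1)) := by rw [hc, one_mul]
      _ = F * C (coeff s F)⁻¹ := by rw [mul_assoc, ← hm, mul_comm]
  rcases hF.prime.dvd_or_dvd hd with h | h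
  · exact h0 (hF.prime.dvd_of_dvd_pow h)
  · exact h1 (hF.prime.dvd_of_dvd_pow h)

lemma card_assoc_bound (d : ℕ) (Q : MvPolynomial (Fin 2) ℂ) (hQ : Q ≠ 0)
    (S : Finset (Associates (MvPolynomial (Fin 2) ℂ)))
    (hS : ∀ p ∈ S, ∃ q, Associates.mk q = p ∧ q ≠ 0 ∧ q.totalDegree = d)
    (hdiv : ∏ p ∈ S, p ∣ Associates.mk Q) : S.card * d ≤ Q.totalDegree := by
  classical
  choose! q hq using hS
  have e : ∏ p ∈ S, p = Associates.mk (∏ p ∈ S, q p) := by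
    rw [← Associates.mkMonoidHom_apply, map_prod]
    exact Finset.prod_congr rfl fun p hp => (hq p hp).1.symm
  rw [e, Associates.mk_dvd_mk] at hdiv
  have h2 := totalDegree_le_of_dvd_of_isDomain hdiv hQ
  have h3 : ∀ S' ⊆ S, (∏ p ∈ S', q p).totalDegree = S'.card * d := by
    intro S'
    induction S' using Finset.induction_on with
    | empty => simp
    | insert a S' ha ih =>
      intro hsub
      rw [Finset.prod_insert ha, totalDegree_mul_of_isDomain (hq a (hsub (by simp))).2.1,
        ih (fun x hx => hsub (by simp [hx])), (hq a (hsub (by simp))).2.2,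
        Finset.card_insert_of_notMem ha]
      · ring
      · exact Finset.prod_ne_zero_iff.2 fun p hp => (hq p (hsub (by simp [hp]))).2.1
  rw [h3 S subset_rfl] at h2
  exact h2

/-- Many root of unity translates of `F` are proportional. -/
lemma many_translates (F : MvPolynomial (Fin 2) ℂ) (hF : Irreducible F) (N : ℕ) (hN : 0 < N)
    (e : ℂ) (he : e ≠ 0) (hdiv : F ∣ expand N (tr e e F)) :
    ∃ T : Finset (ℂ × ℂ), N ≤ T.card ∧ (∀ g ∈ T, g.1 ≠ 0 ∧ g.2 ≠ 0) ∧
      ∀ g ∈ T, ∀ g' ∈ T, Associated (tr g.1 g.2 F) (tr g'.1 g'.2 F) := by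
  classical
  let R := Polynomial.nthRootsFinset N (1 : ℂ)
  have hR : R.card = N := (Complex.isPrimitiveRoot_exp N hN.ne').card_nthRootsFinset
  have hR1 : ∀ z ∈ R, z ^ N = 1 := fun z hz => (Polynomial.mem_nthRootsFinset hN 1).1 hz
  have hR0 : ∀ z ∈ R, z ≠ 0 := fun z hz h => by
    have := hR1 z hz
    rw [h, zero_pow hN.ne'] at this
    exact zero_ne_one this
  let φ : ℂ × ℂ → Associates (MvPolynomial (Fin 2) ℂ) := fun g => Associates.mk (tr g.1 g.2 F)
  let S := (R ×ˢ R).image φ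
  have hne : (R ×ˢ R).Nonempty := by
    rw [← Finset.card_pos, Finset.card_product, hR]; positivity
  have htr0 : tr e e F ≠ 0 := (tr_irreducible e e he he hF).ne_zero
  have hd : S.card * F.totalDegree ≤ (expand N (tr e e F)).totalDegree := by
    apply card_assoc_bound
    · exact (expand_ne_zero hN).2 htr0
    · intro p hp
      obtain ⟨g, hg, rfl⟩ := Finset.mem_image.1 hp
      rw [Finset.mem_product] at hg
      exact ⟨_, rfl, (tr_irreducible _ _ (hR0 _ hg.1) (hR0 _ hg.2) hF).ne_zero,
        totalDegree_tr _ _ (hR0 _ hg.1) (hR0 _ hg.2) F⟩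
    · apply Finset.prod_primes_dvd
      · intro p hp
        obtain ⟨g, hg, rfl⟩ := Finset.mem_image.1 hp
        rw [Finset.mem_product] at hg
        exact Associates.prime_mk.2 (tr_irreducible _ _ (hR0 _ hg.1) (hR0 _ hg.2) hF).prime
      · intro p hp
        obtain ⟨g, hg, rfl⟩ := Finset.mem_image.1 hp
        rw [Finset.mem_product] at hg
        rw [Associates.mk_dvd_mk, ← tr_expand g.1 g.2 N (hR1 _ hg.1) (hR1 _ hg.2)]
        exact map_dvd _ hdiv
  rw [totalDegree_expand, totalDegree_tr e e he he, mul_comm] at hd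
  have hpos : 0 < F.totalDegree := by
    rw [Nat.pos_iff_ne_zero]
    intro h
    rw [totalDegree_eq_zero_iff_eq_C] at h
    have hc : coeff 0 F ≠ 0 := fun hc => hF.ne_zero (by rw [h, hc, C_0])
    exact hF.not_isUnit (by rw [h]; exact (IsUnit.mk0 _ hc).map C)
  have hcard : S.card ≤ N := Nat.le_of_mul_le_mul_left hd hpos
  obtain ⟨y, hy, hyc⟩ := Finset.exists_le_card_fiber_of_mul_le_card_of_maps_to
    (s := R ×ˢ R) (t := S) (f := φ) (n := N)
    (fun a ha => Finset.mem_image_of_mem _ ha) (hne.image _)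
    (by rw [Finset.card_product, hR]; exact Nat.mul_le_mul_right _ hcard)
  refine ⟨_, hyc, ?_, ?_⟩
  · intro g hg
    rw [Finset.mem_filter, Finset.mem_product] at hg
    exact ⟨hR0 _ hg.1.1, hR0 _ hg.1.2⟩
  · intro g hg g' hg'
    rw [Finset.mem_filter] at hg hg'
    exact Associates.mk_eq_mk_iff_associated.1 (hg.2.trans hg'.2.symm)

lemma assoc_ratio (F : MvPolynomial (Fin 2) ℂ) (g g' : ℂ × ℂ)
    (hg : g.1 ≠ 0 ∧ g.2 ≠ 0) (hg' : g'.1 ≠ 0 ∧ g'.2 ≠ 0)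
    (h : Associated (tr g'.1 g'.2 F) (tr g.1 g.2 F)) (s t : Fin 2 →₀ ℕ)
    (hs : s ∈ F.support) (ht : t ∈ F.support) :
    (g.1 / g'.1) ^ ((t 0 : ℤ) - s 0) * (g.2 / g'.2) ^ ((t 1 : ℤ) - s 1) = 1 := by
  obtain ⟨u, hu⟩ := h
  obtain ⟨c, hc, hc'⟩ := (MvPolynomial.isUnit_iff_eq_C_of_isReduced).1 u.isUnit
  rw [hc', mul_comm] at hu
  have key : ∀ v ∈ F.support, (g.1 / g'.1) ^ (v 0) * (g.2 / g'.2) ^ (v 1) = c := by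
    intro v hv
    have := congrArg (coeff v) hu
    rw [coeff_C_mul, coeff_tr, coeff_tr, ← mul_assoc] at this
    have := mul_right_cancel₀ (mem_support_iff.1 hv) this
    have h1 := pow_ne_zero (v 0) hg'.1
    have h2 := pow_ne_zero (v 1) hg'.2
    rw [div_pow, div_pow]
    field_simp
    rw [← this]
    ring
  have ha : g.1 / g'.1 ≠ 0 := div_ne_zero hg.1 hg'.1
  have hb : g.2 / g'.2 ≠ 0 := div_ne_zero hg.2 hg'.2
  have k1 := key s hs
  have k2 := key t ht
  rw [zpow_sub₀ ha, zpow_sub₀ hb]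
  simp only [zpow_natCast]
  have h1 := pow_ne_zero (s 0) ha
  have h2 := pow_ne_zero (s 1) hb
  rw [div_mul_div_comm, k1, k2, div_self]
  rw [← k1]
  exact mul_ne_zero h1 h2

lemma det_root (a b : ℂ) (ha : a ≠ 0) (hb : b ≠ 0) (p q p' q' : ℤ)
    (h : a ^ p * b ^ q = 1) (h' : a ^ p' * b ^ q' = 1) :
    a ^ (p * q' - p' * q) = 1 ∧ b ^ (p * q' - p' * q) = 1 := by
  have e1 : a ^ p = b ^ (-q) := by rw [zpow_neg]; exact eq_inv_of_mul_eq_one_left h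
  have e2 : a ^ p' = b ^ (-q') := by rw [zpow_neg]; exact eq_inv_of_mul_eq_one_left h'
  have f1 : b ^ q = a ^ (-p) := by rw [zpow_neg]; exact eq_inv_of_mul_eq_one_right h
  have f2 : b ^ q' = a ^ (-p') := by rw [zpow_neg]; exact eq_inv_of_mul_eq_one_right h'
  constructor
  · rw [zpow_sub₀ ha, zpow_mul, zpow_mul, e1, e2, ← zpow_mul, ← zpow_mul]
    rw [show -q * q' = -q' * q by ring]
    exact div_self (zpow_ne_zero _ hb)
  · rw [zpow_sub₀ hb, mul_comm p, mul_comm p', zpow_mul, zpow_mul, f1, f2, ← zpow_mul, ← zpow_mul]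
    rw [show -p' * p = -p * p' by ring]
    exact div_self (zpow_ne_zero _ ha)

/-- The support of `F` lies on a line. -/
lemma support_line (F : MvPolynomial (Fin 2) ℂ) (hF : Irreducible F)
    (hdiv : ∀ K : ℕ, ∃ N > K, ∃ e : ℂ, e ≠ 0 ∧ F ∣ expand N (tr e e F))
    (s t u : Fin 2 →₀ ℕ) (hs : s ∈ F.support) (ht : t ∈ F.support) (hu : u ∈ F.support) :
    ((t 0 : ℤ) - s 0) * ((u 1 : ℤ) - s 1) - ((u 0 : ℤ) - s 0) * ((t 1 : ℤ) - s 1) = 0 := by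
  classical
  by_contra hD
  set D := ((t 0 : ℤ) - s 0) * ((u 1 : ℤ) - s 1) - ((u 0 : ℤ) - s 0) * ((t 1 : ℤ) - s 1) with hDdef
  set M := D.natAbs with hM
  have hMpos : 0 < M := Int.natAbs_pos.2 hD
  obtain ⟨N, hN, e, he, hdvd⟩ := hdiv (M * M)
  obtain ⟨T, hT, hT0, hTa⟩ := many_translates F hF N (by omega) e he hdvd
  have hTne : T.Nonempty := by rw [← Finset.card_pos]; omega
  obtain ⟨g', hg'⟩ := hTne
  let R := Polynomial.nthRootsFinset M (1 : ℂ)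
  have hR : R.card = M := (Complex.isPrimitiveRoot_exp M hMpos.ne').card_nthRootsFinset
  have hnat : ∀ a : ℂ, a ^ D = 1 → a ∈ R := by
    intro a h
    rw [Polynomial.mem_nthRootsFinset hMpos, ← zpow_natCast, hM]
    rcases Int.natAbs_eq D with h' | h'
    · rw [← h', h]
    · have : ((D.natAbs : ℕ) : ℤ) = -D := by omega
      rw [this, zpow_neg, h, inv_one]
  have hle : T.card ≤ (R ×ˢ R).card := by
    apply Finset.card_le_card_of_injOn (fun g => (g.1 / g'.1, g.2 / g'.2))
    · intro g hg
      have h1 := assoc_ratio F g g' (hT0 g hg) (hT0 g' hg') (hTa g' hg' g hg) s t hs ht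
      have h2 := assoc_ratio F g g' (hT0 g hg) (hT0 g' hg') (hTa g' hg' g hg) s u hs hu
      have h3 := det_root _ _ (div_ne_zero (hT0 g hg).1 (hT0 g' hg').1)
        (div_ne_zero (hT0 g hg).2 (hT0 g' hg').2) _ _ _ _ h1 h2
      rw [Finset.mem_coe, Finset.mem_product]
      exact ⟨hnat _ h3.1, hnat _ h3.2⟩
    · intro g hg k hk hgk
      simp only [Prod.mk.injEq] at hgk
      have h1 := (hT0 g' hg').1
      have h2 := (hT0 g' hg').2
      exact Prod.ext ((div_left_inj' h1).1 hgk.1) ((div_left_inj' h2).1 hgk.2)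
  rw [Finset.card_product, hR] at hle
  omega

lemma line_dir (F : MvPolynomial (Fin 2) ℂ) 
    (hex : ∃ s ∈ F.support, ∃ t ∈ F.support, s ≠ t)
    (hl : ∀ s t u : Fin 2 →₀ ℕ, s ∈ F.support → t ∈ F.support → u ∈ F.support →
      ((t 0 : ℤ) - s 0) * ((u 1 : ℤ) - s 1) - ((u 0 : ℤ) - s 0) * ((t 1 : ℤ) - s 1) = 0) :
    ∃ m n κ : ℤ, Int.gcd m n = 1 ∧ ∀ u ∈ F.support, (u 0 : ℤ) * n - u 1 * m = κ := by
  obtain ⟨s, hs, t, ht, hst⟩ := hex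
  set a := (t 0 : ℤ) - s 0 with ha
  set b := (t 1 : ℤ) - s 1 with hb
  have hg : 0 < Int.gcd a b := by
    rw [Int.gcd_pos_iff]
    by_contra! h
    apply hst
    ext i
    fin_cases i
    · simp only [Fin.zero_eta]; omega
    · simp only [Fin.mk_one]; omega
  obtain ⟨m, n, hmn, h1, h2⟩ := Int.exists_gcd_one hg
  refine ⟨m, n, (s 0 : ℤ) * n - s 1 * m, hmn, fun u hu => ?_⟩
  have := hl s t u hs ht hu
  rw [← ha, ← hb] at this
  have hg' : ((Int.gcd a b : ℕ) : ℤ) ≠ 0 := by exact_mod_cast hg.ne'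
  have h3 : ((Int.gcd a b : ℕ) : ℤ) * (((u 0 : ℤ) * n - u 1 * m) - ((s 0 : ℤ) * n - s 1 * m)) = 0 := by
    linear_combination -this + ((u 1 : ℤ) - s 1) * h1 - ((u 0 : ℤ) - s 0) * h2
  rcases mul_eq_zero.1 h3 with h | h
  · exact absurd h hg'
  · linarith

lemma eval_line (F : MvPolynomial (Fin 2) ℂ) (m n κ : ℤ)
    (h : ∀ u ∈ F.support, (u 0 : ℤ) * n - u 1 * m = κ) (x y w : ℂ) (hw : w ≠ 0) :
    eval ![x * w ^ n, y * w ^ (-m)] F = w ^ κ * eval ![x, y] F := by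
  rw [eval_eq', eval_eq', Finset.mul_sum]
  refine Finset.sum_congr rfl fun u hu => ?_
  rw [← h u hu]
  simp only [Fin.prod_univ_two, Matrix.cons_val_zero, Matrix.cons_val_one, mul_pow]
  rw [← zpow_natCast (w ^ n), ← zpow_natCast (w ^ (-m)), ← zpow_mul, ← zpow_mul,
    show (u 0 : ℤ) * n - u 1 * m = n * (u 0 : ℤ) + (-m) * u 1 by ring, zpow_add₀ hw]
  ring

lemma level_param (m n : ℤ) (hmn : Int.gcd m n = 1) (x y x0 y0 : ℂ) (hx : x ≠ 0) (hy : y ≠ 0)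
    (hx0 : x0 ≠ 0) (hy0 : y0 ≠ 0) (h : x ^ m * y ^ n = x0 ^ m * y0 ^ n) :
    ∃ w : ℂ, w ≠ 0 ∧ x = x0 * w ^ n ∧ y = y0 * w ^ (-m) := by
  have hb : m * Int.gcdA m n + n * Int.gcdB m n = 1 := by
    rw [← Int.gcd_eq_gcd_ab, hmn]; rfl
  set p := Int.gcdA m n
  set q := Int.gcdB m n
  obtain ⟨u, hu⟩ : ∃ u, u = x / x0 := ⟨_, rfl⟩
  obtain ⟨v, hv⟩ : ∃ v, v = y / y0 := ⟨_, rfl⟩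
  have hu0 : u ≠ 0 := hu ▸ div_ne_zero hx hx0
  have hv0 : v ≠ 0 := hv ▸ div_ne_zero hy hy0
  have huv : u ^ m * v ^ n = 1 := by
    rw [hu, hv, div_zpow, div_zpow, div_mul_div_comm, h, div_self]
    exact mul_ne_zero (zpow_ne_zero _ hx0) (zpow_ne_zero _ hy0)
  have e1 : u ^ m = v ^ (-n) := by rw [zpow_neg]; exact eq_inv_of_mul_eq_one_left huv
  have f1 : v ^ n = u ^ (-m) := by rw [zpow_neg]; exact eq_inv_of_mul_eq_one_right huv
  refine ⟨u ^ q * v ^ (-p), mul_ne_zero (zpow_ne_zero _ hu0) (zpow_ne_zero _ hv0), ?_, ?_⟩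
  · have : (u ^ q * v ^ (-p)) ^ n = u := by
      rw [mul_zpow, ← zpow_mul, ← zpow_mul, show -p * n = n * (-p) by ring, zpow_mul v, f1,
        ← zpow_mul, ← zpow_add₀ hu0, show q * n + -m * -p = 1 by linarith, zpow_one]
    rw [this, hu]; field_simp
  · have : (u ^ q * v ^ (-p)) ^ (-m) = v := by
      rw [mul_zpow, ← zpow_mul, ← zpow_mul, show q * -m = m * (-q) by ring, zpow_mul u, e1,
        ← zpow_mul, ← zpow_add₀ hv0, show -n * -q + -p * -m = 1 by linarith, zpow_one]
    rw [this, hv]; field_simp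

/-- `X^m Y^n - ν` with denominators cleared. -/
noncomputable def binom (m n : ℤ) (ν : ℂ) : MvPolynomial (Fin 2) ℂ :=
  X 0 ^ m.toNat * X 1 ^ n.toNat - C ν * (X 0 ^ (-m).toNat * X 1 ^ (-n).toNat)

lemma zpow_toNat (x : ℂ) (hx : x ≠ 0) (m : ℤ) : x ^ m.toNat = x ^ m * x ^ (-m).toNat := by
  rw [← zpow_natCast, ← zpow_natCast, ← zpow_add₀ hx]
  congr 1
  omega

lemma eval_binom (m n : ℤ) (ν x y : ℂ) (hx : x ≠ 0) (hy : y ≠ 0) :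
    eval ![x, y] (binom m n ν) = 0 ↔ x ^ m * y ^ n = ν := by
  have h1 : eval ![x, y] (binom m n ν) =
      (x ^ m * y ^ n - ν) * (x ^ (-m).toNat * y ^ (-n).toNat) := by
    simp only [binom, map_sub, map_mul, map_pow, eval_X, eval_C, Matrix.cons_val_zero,
      Matrix.cons_val_one]
    rw [zpow_toNat x hx m, zpow_toNat y hy n]
    ring
  rw [h1, mul_eq_zero, sub_eq_zero]
  constructor
  · rintro (h | h)
    · exact h
    · exact absurd h (mul_ne_zero (pow_ne_zero _ hx) (pow_ne_zero _ hy))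
  · exact Or.inl

lemma dvd_of_vanish (F G : MvPolynomial (Fin 2) ℂ) (hF : Irreducible F) (hG : G ≠ 0)
    (x0 y0 : ℂ) (hx : x0 ≠ 0) (hy : y0 ≠ 0) (hz : eval ![x0, y0] G = 0)
    (h : ∀ x y : ℂ, x ≠ 0 → y ≠ 0 → eval ![x, y] G = 0 → eval ![x, y] F = 0) : F ∣ G := by
  obtain ⟨k, hk⟩ := nss G F h
  obtain ⟨p, hp, hpG, hpz⟩ : ∃ p, Irreducible p ∧ p ∣ G ∧ eval ![x0, y0] p = 0 := by
    obtain ⟨S, hS, u, hu⟩ := WfDvdMonoid.exists_factors G hG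
    have hu' : eval ![x0, y0] (u : MvPolynomial (Fin 2) ℂ) ≠ 0 :=
      (u.isUnit.map (eval ![x0, y0])).ne_zero
    rw [← hu, map_mul, mul_eq_zero, or_iff_left hu', map_multiset_prod,
      Multiset.prod_eq_zero_iff, Multiset.mem_map] at hz
    obtain ⟨p, hp, hpz⟩ := hz
    exact ⟨p, hS p hp, (Multiset.dvd_prod hp).trans (hu ▸ dvd_mul_right _ _), hpz⟩
  have hX : ∀ q, p ∣ q → eval ![x0, y0] q = 0 := by
    rintro q ⟨c, rfl⟩
    rw [map_mul, hpz, zero_mul]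
  have hpF : p ∣ F := by
    rcases hp.prime.dvd_or_dvd (hp.prime.dvd_of_dvd_pow (hpG.trans hk)) with h' | h'
    · have := hX _ h'
      simp [hx, hy] at this
    · exact h'
  exact ((hp.associated_of_dvd hF hpF).symm.dvd).trans hpG

theorem stmt8 (r : ℕ) (hr : 2 ≤ r)
    (F : MvPolynomial (Fin 2) ℂ) (hF : Irreducible F)
    (f : ℂ × ℂ → ℂ × ℂ)
    (hf : (∀ p : ℂ × ℂ, f p = (p.1 ^ r, p.2 ^ r)) ∨
          (∀ p : ℂ × ℂ, f p = (-p.1 ^ r, -p.2 ^ r)))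
    (hinv : ∀ x y : ℂ, x ≠ 0 → y ≠ 0 → eval ![x, y] F = 0 →
      eval ![(f (x, y)).1, (f (x, y)).2] F = 0) :
    (∃ c : ℂ, F = C c * X 0) ∨ (∃ c : ℂ, F = C c * X 1) ∨
      ∃ (m n : ℤ) (ν : ℂ), Int.gcd m n = 1 ∧ (∃ k : ℕ, 0 < k ∧ ν ^ k = 1) ∧
        {p : ℂ × ℂ | p.1 ≠ 0 ∧ p.2 ≠ 0 ∧ eval ![p.1, p.2] F = 0} =
          {p : ℂ × ℂ | p.1 ≠ 0 ∧ p.2 ≠ 0 ∧ p.1 ^ m * p.2 ^ n = ν} := by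
  by_cases h0 : F ∣ X 0
  · exact Or.inl (dvd_X_case F hF 0 h0)
  by_cases h1 : F ∣ X 1
  · exact Or.inr (Or.inl (dvd_X_case F hF 1 h1))
  refine Or.inr (Or.inr ?_)
  -- a uniform form of the map
  obtain ⟨e, he2, hfe⟩ : ∃ e : ℂ, e ^ 2 = 1 ∧ ∀ x y : ℂ, x ≠ 0 → y ≠ 0 → eval ![x, y] F = 0 →
      eval ![e * x ^ r, e * y ^ r] F = 0 := by
    rcases hf with hf | hf
    · refine ⟨1, by norm_num, fun x y hx hy hz => ?_⟩
      have := hinv x y hx hy hz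
      rw [hf] at this
      simpa using this
    · refine ⟨-1, by norm_num, fun x y hx hy hz => ?_⟩
      have := hinv x y hx hy hz
      rw [hf] at this
      simpa using this
  have he : e ≠ 0 := by
    rintro rfl
    norm_num at he2
  have hiter : ∀ k : ℕ, ∃ c : ℂ, c ≠ 0 ∧ ∀ x y : ℂ, x ≠ 0 → y ≠ 0 → eval ![x, y] F = 0 →
      eval ![c * x ^ (r ^ k), c * y ^ (r ^ k)] F = 0 := by
    intro k
    induction k with
    | zero => exact ⟨1, one_ne_zero, fun x y _ _ hz => by simpa using hz⟩
    | succ k ih =>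
      obtain ⟨c, hc, h⟩ := ih
      refine ⟨e * c ^ r, mul_ne_zero he (pow_ne_zero _ hc), fun x y hx hy hz => ?_⟩
      have := hfe _ _ (mul_ne_zero hc (pow_ne_zero _ hx)) (mul_ne_zero hc (pow_ne_zero _ hy))
        (h x y hx hy hz)
      rw [mul_pow, mul_pow, ← pow_mul, ← pow_mul, ← pow_succ, ← mul_assoc, ← mul_assoc] at this
      exact this
  have hdiv : ∀ K : ℕ, ∃ N > K, ∃ c : ℂ, c ≠ 0 ∧ F ∣ expand N (tr c c F) := by
    intro K
    obtain ⟨c, hc, h⟩ := hiter K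
    refine ⟨r ^ K, Nat.lt_pow_self (by omega), c, hc, nss_prime F _ hF h0 h1 ?_⟩
    intro x y hx hy hz
    have e1 : (![x, y] : Fin 2 → ℂ) ^ (r ^ K) = ![x ^ (r ^ K), y ^ (r ^ K)] := by
      ext i; fin_cases i <;> simp
    rw [eval_expand, e1, eval_tr]
    exact h x y hx hy hz
  obtain ⟨m, n, κ, hmn, hκ⟩ := line_dir F (exists_two F hF h0 h1)
    (fun s t u hs ht hu => support_line F hF hdiv s t u hs ht hu)
  -- a point of the curve on the torus
  obtain ⟨x0, y0, hx0, hy0, hz0⟩ : ∃ x y : ℂ, x ≠ 0 ∧ y ≠ 0 ∧ eval ![x, y] F = 0 := by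
    by_contra! hcon
    have : F ∣ 1 := nss_prime F 1 hF h0 h1 fun x y hx hy hz => absurd hz (hcon x y hx hy)
    exact hF.not_isUnit (isUnit_of_dvd_one this)
  obtain ⟨ν, hν⟩ : ∃ ν, ν = x0 ^ m * y0 ^ n := ⟨_, rfl⟩
  have hν0 : ν ≠ 0 := hν ▸ mul_ne_zero (zpow_ne_zero _ hx0) (zpow_ne_zero _ hy0)
  have hsub : ∀ x y : ℂ, x ≠ 0 → y ≠ 0 → x ^ m * y ^ n = ν → eval ![x, y] F = 0 := by
    intro x y hx hy h
    obtain ⟨w, hw, rfl, rfl⟩ := level_param m n hmn x y x0 y0 hx hy hx0 hy0 (h.trans hν)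
    rw [eval_line F m n κ hκ _ _ _ hw, hz0, mul_zero]
  have hG0 : binom m n ν ≠ 0 := by
    intro h
    have key : ∀ x y : ℂ, x ≠ 0 → y ≠ 0 → eval ![x, y] F = 0 := fun x y hx hy =>
      hsub x y hx hy ((eval_binom m n ν x y hx hy).1 (by rw [h, map_zero]))
    obtain ⟨k, hk⟩ := nss 0 F fun x y hx hy _ => key x y hx hy
    have h5 := eq_zero_of_pow_eq_zero (zero_dvd_iff.1 hk)
    simp [hF.ne_zero] at h5
  have hFG : F ∣ binom m n ν := dvd_of_vanish F _ hF hG0 x0 y0 hx0 hy0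
    ((eval_binom m n ν x0 y0 hx0 hy0).2 hν.symm)
    fun x y hx hy hz => hsub x y hx hy ((eval_binom m n ν x y hx hy).1 hz)
  have hsup : ∀ x y : ℂ, x ≠ 0 → y ≠ 0 → eval ![x, y] F = 0 → x ^ m * y ^ n = ν := by
    intro x y hx hy hz
    obtain ⟨c, hc⟩ := hFG
    rw [← eval_binom m n ν x y hx hy, hc, map_mul, hz, zero_mul]
  refine ⟨m, n, ν, hmn, ⟨2 * (r - 1), by omega, ?_⟩, ?_⟩
  · have h2 := hsup _ _ (mul_ne_zero he (pow_ne_zero r hx0)) (mul_ne_zero he (pow_ne_zero r hy0))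
      (hfe x0 y0 hx0 hy0 hz0)
    have h3 : e ^ m * e ^ n * ν ^ r = ν := by
      refine Eq.trans ?_ h2
      rw [hν]
      simp only [mul_zpow, mul_pow, ← zpow_natCast, ← zpow_mul]
      simp only [mul_comm]
      ring
    have h4 : (e ^ m * e ^ n) ^ 2 = 1 := by
      rw [← zpow_add₀ he, ← zpow_natCast, ← zpow_mul, mul_comm, zpow_mul]
      norm_num [he2]
    have h5 : ν ^ (r * 2) = ν ^ 2 := by
      rw [pow_mul]
      calc (ν ^ r) ^ 2 = (e ^ m * e ^ n) ^ 2 * (ν ^ r) ^ 2 := by rw [h4, one_mul]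
        _ = (e ^ m * e ^ n * ν ^ r) ^ 2 := by ring
        _ = ν ^ 2 := by rw [h3]
    have h6 : ν ^ (2 * (r - 1)) * ν ^ 2 = 1 * ν ^ 2 := by
      rw [← pow_add, one_mul, ← h5]
      congr 1
      omega
    exact mul_right_cancel₀ (pow_ne_zero 2 hν0) h6
  · ext ⟨x, y⟩
    simp only [Set.mem_ofPred_eq]
    constructor
    · rintro ⟨hx, hy, hz⟩
      exact ⟨hx, hy, hsup x y hx hy hz⟩
    · rintro ⟨hx, hy, hz⟩
      exact ⟨hx, hy, hsub x y hx hy hz⟩
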